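/- Let β, α ∈ ℝ with β ∈ Ξ ∪ {0}, α ∈ Ξ, β < α, and (β, α) ∩ Ξ = ∅ (so that the open interval (β, α) is a connected component of (0, 1/2) ∖ Ξ). Then α ≤ (4/3)·β. -/

import Mathlib

/-- The set `Ξ` of Head's angles: angles `θ ∈ (0, 1/2]` with `2^k θ ∈ [θ, 1] (mod ℤ)`
for all `k ≥ 0`. -/
def HeadXi : Set ℝ :=
  {θ : ℝ | 0 < θ ∧ θ ≤ 1/2 ∧ ∀ k : ℕ, ∃ n : ℤ, θ ≤ 2 ^ k * θ - n ∧ 2 ^ k * θ - n ≤ 1}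

theorem headXi_half {θ : ℝ} (h : θ ∈ HeadXi) : θ / 2 ∈ HeadXi := by
  obtain ⟨h0, h1, h2⟩ := h
  refine ⟨by linarith, by linarith, fun k => ?_⟩
  cases k with
  | zero => exact ⟨0, by norm_num, by norm_num; linarith⟩
  | succ k =>
    obtain ⟨n, ha, hb⟩ := h2 k
    have e : (2:ℝ) ^ (k+1) * (θ / 2) = 2 ^ k * θ := by ring
    exact ⟨n, by rw [e]; linarith, by rw [e]; linarith⟩

theorem headXi_scale {θ : ℝ} (h : θ ∈ HeadXi) (j : ℕ) : θ * (1/2) ^ j ∈ HeadXi := by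
  induction j with
  | zero => simpa using h
  | succ j ih =>
    have := headXi_half ih
    have e : θ * (1/2) ^ (j+1) = θ * (1/2) ^ j / 2 := by ring
    rwa [e]

theorem headXi_one_half : (1/2 : ℝ) ∈ HeadXi := by
  refine ⟨by norm_num, by norm_num, fun k => ?_⟩
  cases k with
  | zero => exact ⟨0, by norm_num, by norm_num⟩
  | succ k =>
    have e : (2:ℝ) ^ (k+1) * (1/2) - ((2 ^ k - 1 : ℤ) : ℝ) = 1 := by push_cast; ring
    exact ⟨2 ^ k - 1, by rw [e]; norm_num, by rw [e]⟩

theorem headXi_three_eighths : (3/8 : ℝ) ∈ HeadXi := by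
  refine ⟨by norm_num, by norm_num, fun k => ?_⟩
  match k with
  | 0 => exact ⟨0, by norm_num, by norm_num⟩
  | 1 => exact ⟨0, by norm_num, by norm_num⟩
  | 2 => exact ⟨1, by norm_num, by norm_num⟩
  | k+3 =>
    have e : (2:ℝ) ^ (k+3) * (3/8) - ((3 * 2 ^ k - 1 : ℤ) : ℝ) = 1 := by push_cast; ring
    exact ⟨3 * 2 ^ k - 1, by rw [e]; norm_num, by rw [e]⟩

theorem headXi_third : (1/3 : ℝ) ∈ HeadXi := by
  refine ⟨by norm_num, by norm_num, fun k => ?_⟩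
  have key : ∃ n : ℤ, (2:ℝ) ^ k * (1/3) - n = 1/3 ∨ (2:ℝ) ^ k * (1/3) - n = 2/3 := by
    induction k with
    | zero => exact ⟨0, Or.inl (by norm_num)⟩
    | succ k ih =>
      obtain ⟨n, h | h⟩ := ih
      · exact ⟨2 * n, Or.inr (by push_cast; rw [pow_succ]; linarith)⟩
      · exact ⟨2 * n + 1, Or.inl (by push_cast; rw [pow_succ]; linarith)⟩
  obtain ⟨n, h | h⟩ := key
  · exact ⟨n, by rw [h], by rw [h]; norm_num⟩
  · exact ⟨n, by rw [h]; norm_num, by rw [h]; norm_num⟩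

/-- If `(β, α)` is a connected component of `(0, 1/2) ∖ Ξ`, then `α ≤ (4/3)·β`. -/
theorem headXi_gap_ratio (β α : ℝ) (hβ : β ∈ HeadXi ∪ {0}) (hα : α ∈ HeadXi)
    (hlt : β < α) (hgap : Set.Ioo β α ∩ HeadXi = ∅) :
    α ≤ (4/3) * β := by
  obtain ⟨h0, h1, -⟩ := hα
  have key : ∀ γ ∈ HeadXi, γ < α → γ ≤ β := by
    intro γ hγ hlt'
    by_contra hc
    have : γ ∈ Set.Ioo β α ∩ HeadXi := ⟨⟨not_le.mp hc, hlt'⟩, hγ⟩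
    rw [hgap] at this
    exact this
  obtain ⟨j, hj1, hj2⟩ := exists_nat_pow_near_of_lt_one (x := 2 * α) (y := (1/2 : ℝ))
    (by linarith) (by linarith) (by norm_num) (by norm_num)
  rw [pow_succ] at hj1
  have a1 := headXi_half (headXi_scale headXi_one_half j)
  have a2 := headXi_scale headXi_third j
  have a3 := headXi_scale headXi_three_eighths j
  have b1 := key _ a1
  have b2 := key _ a2
  have b3 := key _ a3
  generalize ((1:ℝ)/2) ^ j = c at *
  have d1 := b1 (by linarith)
  by_cases c1 : α ≤ 1/3 * c
  · linarith
  have d2 := b2 (by linarith)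
  by_cases c2 : α ≤ 3/8 * c
  · linarith
  have d3 := b3 (by linarith)
  linarith
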